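/- (Lemma 2(c)) Under the augmented push-sum dynamics with the ergodicity hypothesis, for every player i ∈ {1,…,n}, ∑_{k=0}^{∞} ρ(k) ‖z_i(k+1) − x̄(k)‖ < ∞. -/

import Mathlib

open Filter Topology

/-- Backward product `Φ(k,t) = A(k) A(k−1) ⋯ A(k−t)`. -/
noncomputable def backProd {N : ℕ} (A : ℕ → Matrix (Fin N) (Fin N) ℝ) (k t : ℕ) :
    Matrix (Fin N) (Fin N) ℝ :=
  ((List.range (t + 1)).map fun s => A (k - s)).prod


/-!
Both the push-sum numerators and the weights `y` obey a perturbed recursion `u(k+1) = A(k)u(k) +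
d(k)`. Unrolling it and replacing each backward product by its rank-one limit `φ(k)1ᵀ` bounds
the distance from `A(k)u(k)` to `φ(k)` times the total mass by the geometrically discounted sum
of the sizes of the past perturbations. Column stochasticity makes the total masses `∑ᵢ xᵢ(k)`
and `n`, so `φ(k)` cancels in the ratio and `‖zᵢ(k+1) - x̄(k)‖` is controlled by the discounted
sum of the displacements `Δ`. Boundedness of the action sets first yields boundedness of `z`,
hence of the directions `Fᵢ`. The displacements are then `O(α)`, hence square summable, because
each `αᵢ(k)` collects at most `σ₂` terms of disjoint blocks of `ρ`. Discounting preserves square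
summability, and the product of two square summable sequences is summable.
-/

open scoped Matrix.Module

section SquareSummable

lemma summable_mul_of_summable_sq {ι : Type*} {a b : ι → ℝ} (ha : Summable fun k => a k ^ 2)
    (hb : Summable fun k => b k ^ 2) : Summable fun k => a k * b k := by
  refine .of_norm_bounded (ha.add hb) fun k => ?_
  rw [Real.norm_eq_abs, abs_mul, ← sq_abs (a k), ← sq_abs (b k)]
  nlinarith [two_mul_le_add_sq |a k| |b k|, mul_nonneg (abs_nonneg (a k)) (abs_nonneg (b k))]

lemma summable_sq_of_abs_le_mul {ι : Type*} {a b : ι → ℝ} {C : ℝ}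
    (ha : Summable fun k => a k ^ 2) (h : ∀ k, |b k| ≤ C * |a k|) :
    Summable fun k => b k ^ 2 := by
  refine .of_nonneg_of_le (fun k => sq_nonneg _) (fun k => ?_) (ha.mul_left (C ^ 2))
  rw [← sq_abs (b k), ← sq_abs (a k), ← mul_pow]
  exact pow_le_pow_left₀ (abs_nonneg _) (h k) 2

lemma summable_sq_norm_smul {ι V : Type*} [SeminormedAddCommGroup V] [NormedSpace ℝ V]
    {a : ι → ℝ} {g : ι → V} {C : ℝ} (ha : Summable fun k => a k ^ 2) (hg : ∀ k, ‖g k‖ ≤ C) :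
    Summable fun k => ‖a k • g k‖ ^ 2 :=
  summable_sq_of_abs_le_mul (C := C) ha fun k => by
    rw [abs_norm, norm_smul, Real.norm_eq_abs, mul_comm]
    exact mul_le_mul_of_nonneg_right (hg k) (abs_nonneg _)

lemma summable_sq_sum {ι κ : Type*} {s : Finset ι} {f : ι → κ → ℝ}
    (hf : ∀ i ∈ s, Summable fun k => f i k ^ 2) : Summable fun k => (∑ i ∈ s, f i k) ^ 2 :=
  .of_nonneg_of_le (fun _ => sq_nonneg _) (fun _ => sq_sum_le_card_mul_sum_sq)
    ((summable_sum hf).mul_left _)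

lemma sum_range_sum_Ico {M : Type*} [AddCommMonoid M] {l : ℕ → ℕ} (hl : Monotone l) (f : ℕ → M)
    (K : ℕ) :
    ∑ k ∈ Finset.range K, ∑ t ∈ Finset.Ico (l k) (l (k + 1)), f t =
      ∑ t ∈ Finset.Ico (l 0) (l K), f t := by
  induction K with
  | zero => simp
  | succ K ih =>
    rw [Finset.sum_range_succ, ih,
      Finset.sum_Ico_consecutive f (hl (Nat.zero_le K)) (hl K.le_succ)]

lemma summable_sq_sum_Ico {l : ℕ → ℕ} {σ : ℕ} (hl : ∀ k, l k ≤ l (k + 1) ∧ l (k + 1) ≤ l k + σ)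
    {ρ : ℕ → ℝ} (hρ : Summable fun t => ρ t ^ 2) :
    Summable fun k => (∑ t ∈ Finset.Ico (l k) (l (k + 1)), ρ t) ^ 2 := by
  have hmono : Monotone l := monotone_nat_of_le_succ fun k => (hl k).1
  have hblock : Summable fun k => ∑ t ∈ Finset.Ico (l k) (l (k + 1)), ρ t ^ 2 :=
    summable_of_sum_range_le (fun k => Finset.sum_nonneg fun t _ => sq_nonneg (ρ t)) fun K =>
      (sum_range_sum_Ico hmono (fun t => ρ t ^ 2) K).trans_le
        (hρ.sum_le_tsum _ fun t _ => sq_nonneg (ρ t))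
  refine .of_nonneg_of_le (fun k => sq_nonneg _) (fun k => ?_) (hblock.mul_left (σ : ℝ))
  have hcard : (Finset.Ico (l k) (l (k + 1))).card ≤ σ := by
    rw [Nat.card_Ico]
    exact Nat.sub_le_iff_le_add'.2 (hl k).2
  exact sq_sum_le_card_mul_sum_sq.trans <|
    mul_le_mul_of_nonneg_right (mod_cast hcard) (Finset.sum_nonneg fun t _ => sq_nonneg (ρ t))

lemma summable_of_succ_le_mul_add {r : ℝ} (hr : r < 1) {a b : ℕ → ℝ} (ha : ∀ k, 0 ≤ a k)
    (hb : Summable b) (h : ∀ k, a (k + 1) ≤ r * a k + b k) : Summable a := by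
  refine summable_of_sum_range_le (c := (a 0 + ∑' k, |b k|) / (1 - r)) ha fun K => ?_
  rw [le_div_iff₀ (sub_pos.2 hr)]
  have hsum : ∑ k ∈ Finset.range (K + 1), a k ≤
      a 0 + (r * ∑ k ∈ Finset.range K, a k + ∑' k, |b k|) := calc
    _ = a 0 + ∑ k ∈ Finset.range K, a (k + 1) := by rw [Finset.sum_range_succ', add_comm]
    _ ≤ a 0 + ∑ k ∈ Finset.range K, (r * a k + |b k|) := by
      gcongr with k
      exact (h k).trans (by gcongr; exact le_abs_self _)
    _ ≤ _ := by
      rw [Finset.sum_add_distrib, ← Finset.mul_sum]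
      gcongr
      exact hb.abs.sum_le_tsum _ fun k _ => abs_nonneg (b k)
  rw [Finset.sum_range_succ] at hsum
  linarith [ha K]

end SquareSummable

/-- The geometrically discounted accumulation
`lam ^ k * c + lam ^ (k - 1) * D 0 + ⋯ + lam * D (k - 2) + D (k - 1)`
of an initial error `c` and later perturbations `D`. -/
def geomAccum (lam c : ℝ) (D : ℕ → ℝ) (k : ℕ) : ℝ :=
  lam ^ k * c + ∑ s ∈ Finset.range k, lam ^ (k - 1 - s) * D s

section GeomAccum

variable {lam c : ℝ} {D : ℕ → ℝ}

lemma geomAccum_succ (lam c : ℝ) (D : ℕ → ℝ) (k : ℕ) :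
    geomAccum lam c D (k + 1) = lam * geomAccum lam c D k + D k := by
  have hshift : ∀ s ∈ Finset.range k,
      lam ^ (k + 1 - 1 - s) * D s = lam * (lam ^ (k - 1 - s) * D s) := fun s hs => by
    rw [← mul_assoc, ← pow_succ']
    congr 2
    have := Finset.mem_range.1 hs
    omega
  rw [geomAccum, geomAccum, Finset.sum_range_succ, Finset.sum_congr rfl hshift, ← Finset.mul_sum,
    Nat.add_sub_cancel, Nat.sub_self]
  ring

lemma geomAccum_add_init (lam c r : ℝ) (D : ℕ → ℝ) (k : ℕ) :
    geomAccum lam (c + r) D k = geomAccum lam c D k + lam ^ k * r := by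
  simp only [geomAccum]
  ring

lemma exists_geomAccum_le (hlam0 : 0 ≤ lam) (hlam1 : lam < 1) {M : ℝ} (hD : ∀ k, D k ≤ M) :
    ∃ C, ∀ k, geomAccum lam c D k ≤ C := by
  refine ⟨max c (M / (1 - lam)), fun k => ?_⟩
  have hM : M ≤ (1 - lam) * max c (M / (1 - lam)) := by
    rw [← div_le_iff₀' (sub_pos.2 hlam1)]
    exact le_max_right _ _
  induction k with
  | zero => simp [geomAccum]
  | succ k ih =>
    rw [geomAccum_succ]
    linarith [mul_le_mul_of_nonneg_left ih hlam0, hD k]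

lemma summable_sq_geomAccum (hlam0 : 0 ≤ lam) (hlam1 : lam < 1) (hD : Summable fun k => D k ^ 2) :
    Summable fun k => geomAccum lam c D k ^ 2 := by
  refine summable_of_succ_le_mul_add hlam1 (fun k => sq_nonneg _) (hD.mul_left (1 - lam)⁻¹)
    fun k => ?_
  have hpos : 0 < 1 - lam := sub_pos.2 hlam1
  have hconv := even_two.convexOn_pow (𝕜 := ℝ) |>.2 (Set.mem_univ (geomAccum lam c D k))
    (Set.mem_univ (D k / (1 - lam))) hlam0 hpos.le (by ring)
  simp only [smul_eq_mul] at hconv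
  calc
    _ = (lam * geomAccum lam c D k + (1 - lam) * (D k / (1 - lam))) ^ 2 := by
      rw [geomAccum_succ, mul_div_cancel₀ _ hpos.ne']
    _ ≤ _ := hconv
    _ = _ := by field_simp

end GeomAccum

section BackProd

variable {N : ℕ} (A : ℕ → Matrix (Fin N) (Fin N) ℝ)

lemma backProd_zero (k : ℕ) : backProd A k 0 = A k := by
  simp [backProd]

lemma backProd_succ_succ (k t : ℕ) : backProd A (k + 1) (t + 1) = A (k + 1) * backProd A k t := by
  simp only [backProd, List.range_succ_eq_map (n := t + 1), List.map_cons, List.prod_cons,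
    List.map_map, Nat.sub_zero]
  congr 3
  funext s
  simp

variable {A} {V : Type*} [AddCommGroup V] [Module ℝ V]

lemma smul_eq_backProd_smul_add_sum {u d : ℕ → Fin N → V}
    (hu : ∀ k, u (k + 1) = A k • u k + d k) (k : ℕ) :
    A k • u k = backProd A k k • u 0 + ∑ s ∈ Finset.range k, backProd A k (k - 1 - s) • d s := by
  induction k with
  | zero => simp [backProd_zero]
  | succ k ih =>
    have hshift : ∀ s ∈ Finset.range k,
        A (k + 1) • backProd A k (k - 1 - s) • d s =
          backProd A (k + 1) (k + 1 - 1 - s) • d s := fun s hs => by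
      rw [← mul_smul, ← backProd_succ_succ]
      congr 2
      have := Finset.mem_range.1 hs
      omega
    rw [hu, smul_add, ih, smul_add, ← mul_smul, ← backProd_succ_succ, Finset.smul_sum,
      Finset.sum_congr rfl hshift, Finset.sum_range_succ, Nat.add_sub_cancel, Nat.sub_self,
      backProd_zero, add_assoc]

end BackProd

lemma sum_matrix_smul {R ι V : Type*} [Ring R] [Fintype ι] [DecidableEq ι] [AddCommGroup V]
    [Module R V] {P : Matrix ι ι R} (hP : ∀ j, ∑ i, P i j = 1) (g : ι → V) :
    ∑ i, (P • g) i = ∑ j, g j := by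
  simp only [Matrix.Module.smul_apply]
  rw [Finset.sum_comm]
  simp only [← Finset.sum_smul, hP, one_smul]

lemma sum_perturbed {R ι V : Type*} [Ring R] [Fintype ι] [DecidableEq ι] [AddCommGroup V]
    [Module R V] {A : ℕ → Matrix ι ι R} (hA : ∀ k j, ∑ i, A k i j = 1) {u d : ℕ → ι → V}
    (hu : ∀ k, u (k + 1) = A k • u k + d k) (k : ℕ) :
    ∑ j, u k j = ∑ j, u 0 j + ∑ s ∈ Finset.range k, ∑ j, d s j := by
  induction k with
  | zero => simp
  | succ k ih =>
    simp only [hu, Pi.add_apply, Finset.sum_add_distrib]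
    rw [sum_matrix_smul (hA k), ih, Finset.sum_range_succ, add_assoc]

lemma norm_matrix_smul_sub_le {ι V : Type*} [Fintype ι] [DecidableEq ι]
    [SeminormedAddCommGroup V] [NormedSpace ℝ V] {P : Matrix ι ι ℝ} {i : ι} {c φ : ℝ}
    (hP : ∀ j, |P i j - φ| ≤ c) (g : ι → V) :
    ‖(P • g) i - φ • ∑ j, g j‖ ≤ c * ∑ j, ‖g j‖ := by
  rw [Matrix.Module.smul_apply, Finset.smul_sum, ← Finset.sum_sub_distrib, Finset.mul_sum]
  refine norm_sum_le_of_le _ fun j _ => ?_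
  rw [← sub_smul, norm_smul]
  exact mul_le_mul_of_nonneg_right (hP j) (norm_nonneg _)

/-- The backward products `Φ(k,t)` approach the rank-one matrix `φ(k) 1ᵀ` geometrically in `t`. -/
def IsGeometricallyErgodic {N : ℕ} (A : ℕ → Matrix (Fin N) (Fin N) ℝ) (φ : ℕ → Fin N → ℝ)
    (B lam : ℝ) : Prop :=
  ∀ k t, t ≤ k → ∀ i j : Fin N, |backProd A k t i j - φ k i| ≤ B * lam ^ t

namespace IsGeometricallyErgodic

variable {N : ℕ} {A : ℕ → Matrix (Fin N) (Fin N) ℝ} {φ : ℕ → Fin N → ℝ} {B lam : ℝ}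
  {V : Type*} [NormedAddCommGroup V] [NormedSpace ℝ V]

lemma norm_smul_sub_sum_le (hE : IsGeometricallyErgodic A φ B lam)
    (hA : ∀ k j, ∑ i, A k i j = 1) {u d : ℕ → Fin N → V}
    (hu : ∀ k, u (k + 1) = A k • u k + d k) (k : ℕ) (i : Fin N) :
    ‖(A k • u k) i - φ k i • ∑ j, u k j‖ ≤
      B * geomAccum lam (∑ j, ‖u 0 j‖) (fun s => ∑ j, ‖d s j‖) k := by
  have hsplit : (A k • u k) i - φ k i • ∑ j, u k j =
      ((backProd A k k • u 0) i - φ k i • ∑ j, u 0 j) + ∑ s ∈ Finset.range k,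
        ((backProd A k (k - 1 - s) • d s) i - φ k i • ∑ j, d s j) := by
    rw [smul_eq_backProd_smul_add_sum hu, sum_perturbed hA hu, Pi.add_apply, Finset.sum_apply,
      smul_add, add_sub_add_comm, Finset.smul_sum (s := Finset.range k), Finset.sum_sub_distrib]
  have hdev (t : ℕ) (ht : t ≤ k) (g : Fin N → V) :
      ‖(backProd A k t • g) i - φ k i • ∑ j, g j‖ ≤ B * (lam ^ t * ∑ j, ‖g j‖) := by
    rw [← mul_assoc]
    exact norm_matrix_smul_sub_le (hE k t ht i) g
  rw [hsplit, geomAccum, mul_add, Finset.mul_sum (s := Finset.range k)]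
  refine norm_add_le_of_le (hdev k le_rfl _) (norm_sum_le_of_le _ fun s _ => hdev (k - 1 - s) ?_ _)
  omega

end IsGeometricallyErgodic

lemma norm_inv_smul_sub_le {V : Type*} [SeminormedAddCommGroup V] [NormedSpace ℝ V] {y η : ℝ}
    (hη : 0 < η) (hy : η ≤ y) (c : ℝ) (w b : V) :
    ‖y⁻¹ • w - b‖ ≤ η⁻¹ * (‖w - c • b‖ + |y - c| * ‖b‖) := by
  have hy0 : 0 < y := hη.trans_le hy
  have hsplit : y⁻¹ • w - b = y⁻¹ • ((w - c • b) - (y - c) • b) := by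
    rw [sub_smul, sub_sub_sub_cancel_right, smul_sub, inv_smul_smul₀ hy0.ne']
  rw [hsplit, norm_smul, norm_inv, Real.norm_of_nonneg hy0.le]
  gcongr
  exact (norm_sub_le _ _).trans_eq (by rw [norm_smul, Real.norm_eq_abs])

lemma sum_comp_extend_zero {ι κ V W : Type*} [Fintype ι] [Fintype κ] [Zero V] [AddCommMonoid W]
    {e : ι → κ} (he : Function.Injective e) {g : V → W} (hg : g 0 = 0) (f : ι → V) :
    ∑ j, g (Function.extend e f 0 j) = ∑ i, g (f i) :=
  (Fintype.sum_of_injective e he _ _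
    (fun j hj => by rw [Function.extend_apply' f _ j hj, Pi.zero_apply, hg])
    fun i => by rw [he.extend_apply]).symm

/-- Push-sum over the matrices `A` tracking the sum of the player states `x`: the player `i` sits
at the node `e i`, all other nodes are virtual and start from zero, and each change of a player's
state is injected at that player's node. -/
structure IsPushSumTracking {N : ℕ} {ι V : Type*} [AddCommGroup V] [Module ℝ V]
    (A : ℕ → Matrix (Fin N) (Fin N) ℝ) (e : ι → Fin N) (x : ℕ → ι → V) (v : ℕ → Fin N → V)
    (y : ℕ → Fin N → ℝ) : Prop where
  v_zero : v 0 = Function.extend e (x 0) 0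
  v_succ : ∀ k, v (k + 1) = A k • v k + Function.extend e (x (k + 1) - x k) 0
  y_zero : y 0 = Function.extend e (1 : ι → ℝ) 0
  y_succ : ∀ k, y (k + 1) = A k • y k

namespace IsPushSumTracking

variable {N : ℕ} {ι V : Type*} {A : ℕ → Matrix (Fin N) (Fin N) ℝ} {e : ι → Fin N}
  {v : ℕ → Fin N → V} {y : ℕ → Fin N → ℝ} {x : ℕ → ι → V}

section Mass

variable [AddCommGroup V] [Module ℝ V]

lemma y_succ_add_zero (h : IsPushSumTracking A e x v y) (k : ℕ) :
    y (k + 1) = A k • y k + (fun _ => 0 : ℕ → Fin N → ℝ) k := by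
  rw [h.y_succ, add_zero]

variable [Fintype ι]

lemma sum_v (h : IsPushSumTracking A e x v y) (he : Function.Injective e)
    (hA : ∀ k j, ∑ i, A k i j = 1) (k : ℕ) : ∑ j, v k j = ∑ i, x k i := by
  have hext (f : ι → V) : ∑ j, Function.extend e f 0 j = ∑ i, f i :=
    sum_comp_extend_zero he (g := id) rfl f
  have hstep (s : ℕ) : ∑ j, Function.extend e (x (s + 1) - x s) 0 j =
      ∑ i, x (s + 1) i - ∑ i, x s i := by
    rw [hext, ← Finset.sum_sub_distrib]
    rfl
  rw [sum_perturbed hA h.v_succ, h.v_zero, hext, Finset.sum_congr rfl fun s _ => hstep s,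
    Finset.sum_range_sub (fun s => ∑ i, x s i), add_sub_cancel]

lemma sum_y (h : IsPushSumTracking A e x v y) (he : Function.Injective e)
    (hA : ∀ k j, ∑ i, A k i j = 1) (k : ℕ) : ∑ j, y k j = Fintype.card ι := by
  rw [sum_perturbed hA h.y_succ_add_zero, h.y_zero]
  simpa using sum_comp_extend_zero he (g := id) rfl (1 : ι → ℝ)

end Mass

variable [NormedAddCommGroup V] [NormedSpace ℝ V] {φ : ℕ → Fin N → ℝ} {B lam η R : ℝ}

section Consensus

variable [Fintype ι]

lemma norm_smul_v_sub_le (h : IsPushSumTracking A e x v y) (he : Function.Injective e)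
    (hA : ∀ k j, ∑ i, A k i j = 1) (hE : IsGeometricallyErgodic A φ B lam) (k : ℕ) (j : Fin N) :
    ‖(A k • v k) j - φ k j • ∑ i, x k i‖ ≤
      B * geomAccum lam (∑ i, ‖x 0 i‖) (fun s => ∑ i, ‖x (s + 1) i - x s i‖) k := by
  have hdev := hE.norm_smul_sub_sum_le hA h.v_succ k j
  simpa only [h.sum_v he hA, h.v_zero, sum_comp_extend_zero he norm_zero, Pi.sub_apply] using hdev

lemma abs_y_sub_le (h : IsPushSumTracking A e x v y) (he : Function.Injective e)
    (hA : ∀ k j, ∑ i, A k i j = 1) (hE : IsGeometricallyErgodic A φ B lam) (k : ℕ) (j : Fin N) :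
    |y (k + 1) j - φ k j * Fintype.card ι| ≤ B * (lam ^ k * Fintype.card ι) := by
  have hdev := hE.norm_smul_sub_sum_le hA h.y_succ_add_zero k j
  rw [← h.y_succ, h.sum_y he hA, h.y_zero, sum_comp_extend_zero he norm_zero] at hdev
  simpa [geomAccum] using hdev

theorem norm_ratio_sub_average_le (h : IsPushSumTracking A e x v y) (he : Function.Injective e)
    (hA : ∀ k j, ∑ i, A k i j = 1) (hE : IsGeometricallyErgodic A φ B lam) (hB : 0 ≤ B)
    (hlam : 0 ≤ lam) (hη : 0 < η) {k : ℕ} {j : Fin N} (hy : η ≤ y (k + 1) j)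
    (hR : ‖∑ i, x k i‖ ≤ R) :
    ‖(y (k + 1) j)⁻¹ • (A k • v k) j - (Fintype.card ι : ℝ)⁻¹ • ∑ i, x k i‖ ≤
      η⁻¹ * B * geomAccum lam (∑ i, ‖x 0 i‖ + R) (fun s => ∑ i, ‖x (s + 1) i - x s i‖) k := by
  have hsum : (Fintype.card ι : ℝ) • (Fintype.card ι : ℝ)⁻¹ • ∑ i, x k i = ∑ i, x k i := by
    rcases isEmpty_or_nonempty ι with _ | _
    · simp
    · rw [smul_inv_smul₀ (Nat.cast_ne_zero.2 Fintype.card_ne_zero)]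
  set b := (Fintype.card ι : ℝ)⁻¹ • ∑ i, x k i
  have hv := h.norm_smul_v_sub_le he hA hE k j
  rw [← hsum, smul_smul] at hv
  have hb : Fintype.card ι * ‖b‖ ≤ R := by
    rwa [← Real.norm_natCast, ← norm_smul, hsum]
  refine (norm_inv_smul_sub_le hη hy (φ k j * Fintype.card ι) _ b).trans ?_
  rw [geomAccum_add_init, mul_assoc, mul_add B]
  refine mul_le_mul_of_nonneg_left (add_le_add hv ?_) (inv_nonneg.2 hη.le)
  calc
    _ ≤ B * (lam ^ k * Fintype.card ι) * ‖b‖ := by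
      gcongr
      exact h.abs_y_sub_le he hA hE k j
    _ = B * (lam ^ k * (Fintype.card ι * ‖b‖)) := by ring
    _ ≤ _ := by gcongr

theorem summable_mul_norm_ratio_sub_average (h : IsPushSumTracking A e x v y)
    (he : Function.Injective e) (hA : ∀ k j, ∑ i, A k i j = 1)
    (hE : IsGeometricallyErgodic A φ B lam) (hB : 0 ≤ B) (hlam0 : 0 ≤ lam) (hlam1 : lam < 1)
    (hη : 0 < η) {j : Fin N} (hy : ∀ k, η ≤ y (k + 1) j) (hR : ∀ k, ‖∑ i, x k i‖ ≤ R)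
    (hstep : Summable fun k => (∑ i, ‖x (k + 1) i - x k i‖) ^ 2)
    {ρ : ℕ → ℝ} (hρ : Summable fun k => ρ k ^ 2) :
    Summable fun k => ρ k *
      ‖(y (k + 1) j)⁻¹ • (A k • v k) j - (Fintype.card ι : ℝ)⁻¹ • ∑ i, x k i‖ := by
  refine summable_mul_of_summable_sq hρ (summable_sq_of_abs_le_mul (C := η⁻¹ * B)
    (summable_sq_geomAccum (c := ∑ i, ‖x 0 i‖ + R) hlam0 hlam1 hstep) fun k => ?_)
  rw [abs_norm]
  exact (h.norm_ratio_sub_average_le he hA hE hB hlam0 hη (hy k) (hR k)).trans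
    (mul_le_mul_of_nonneg_left (le_abs_self _) (by positivity))

end Consensus

theorem exists_norm_ratio_le [Finite ι] (h : IsPushSumTracking A e x v y)
    (he : Function.Injective e) (hA : ∀ k j, ∑ i, A k i j = 1)
    (hE : IsGeometricallyErgodic A φ B lam) (hB : 0 ≤ B)
    (hlam0 : 0 ≤ lam) (hlam1 : lam < 1) (hη : 0 < η) (hx : ∀ k i, ‖x k i‖ ≤ R) :
    ∃ Z, ∀ k j, η ≤ y (k + 1) j → ‖(y (k + 1) j)⁻¹ • (A k • v k) j‖ ≤ Z := by
  cases nonempty_fintype ι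
  have hsum (k : ℕ) : ‖∑ i, x k i‖ ≤ Fintype.card ι • R :=
    norm_sum_le_of_le _ (fun i _ => hx k i) |>.trans_eq (by simp)
  have hstep (k : ℕ) : ∑ i, ‖x (k + 1) i - x k i‖ ≤ Fintype.card ι • (R + R) :=
    Finset.sum_le_card_nsmul _ _ _ fun i _ => norm_sub_le_of_le (hx (k + 1) i) (hx k i)
  obtain ⟨C, hC⟩ := exists_geomAccum_le (c := ∑ i, ‖x 0 i‖ + Fintype.card ι • R) hlam0 hlam1 hstep
  refine ⟨η⁻¹ * B * C + (Fintype.card ι : ℝ)⁻¹ * Fintype.card ι • R, fun k j hy => ?_⟩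
  refine (norm_le_norm_sub_add _ ((Fintype.card ι : ℝ)⁻¹ • ∑ i, x k i)).trans (add_le_add ?_ ?_)
  · exact (h.norm_ratio_sub_average_le he hA hE hB hlam0 hη hy (hsum k)).trans
      (mul_le_mul_of_nonneg_left (hC k) (by positivity))
  · rw [norm_smul, norm_inv, Real.norm_natCast]
    exact mul_le_mul_of_nonneg_left (hsum k) (by positivity)

end IsPushSumTracking

section Players

variable {V : Type*} {n N : ℕ} {hnN : n ≤ N}

lemma eq_extend_castLE [Zero V] {f : Fin n → V} {g : Fin N → V}
    (hg : ∀ i, g (Fin.castLE hnN i) = f i) (hg0 : ∀ j : Fin N, n ≤ (j : ℕ) → g j = 0) :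
    g = Function.extend (Fin.castLE hnN) f 0 := by
  funext j
  by_cases hj : (j : ℕ) < n
  · exact (hg ⟨j, hj⟩).trans ((Fin.castLE_injective hnN).extend_apply f 0 ⟨j, hj⟩).symm
  · have hj' : ¬∃ i, Fin.castLE hnN i = j := fun ⟨i, hi⟩ => hj (hi ▸ i.isLt)
    rw [Function.extend_apply' _ _ _ hj', hg0 j (not_lt.1 hj), Pi.zero_apply]

lemma IsPushSumTracking.of_castLE [AddCommGroup V] [Module ℝ V]
    {A : ℕ → Matrix (Fin N) (Fin N) ℝ} {v w : ℕ → Fin N → V} {y : ℕ → Fin N → ℝ}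
    {x : ℕ → Fin n → V}
    (hv0p : ∀ i, v 0 (Fin.castLE hnN i) = x 0 i) (hy0p : ∀ i, y 0 (Fin.castLE hnN i) = 1)
    (hv0v : ∀ j : Fin N, n ≤ (j : ℕ) → v 0 j = 0) (hy0v : ∀ j : Fin N, n ≤ (j : ℕ) → y 0 j = 0)
    (hw : ∀ k j, w (k + 1) j = ∑ m, A k j m • v k m)
    (hy : ∀ k j, y (k + 1) j = ∑ m, A k j m * y k m)
    (hv : ∀ k j, v (k + 1) j =
      w (k + 1) j + (if h : (j : ℕ) < n then x (k + 1) ⟨j, h⟩ - x k ⟨j, h⟩ else 0)) :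
    IsPushSumTracking A (Fin.castLE hnN) x v y where
  v_zero := eq_extend_castLE hv0p hv0v
  v_succ k := by
    rw [← eq_extend_castLE (f := x (k + 1) - x k)
      (g := fun j => if h : (j : ℕ) < n then x (k + 1) ⟨j, h⟩ - x k ⟨j, h⟩ else 0)
      (fun i => by simp) (fun j hj => dif_neg hj.not_gt)]
    funext j
    rw [hv, hw]
    rfl
  y_zero := eq_extend_castLE hy0p hy0v
  y_succ k := funext (hy k)

end Players

lemma norm_sub_le_two_mul_of_norm_sub_le {V : Type*} [SeminormedAddCommGroup V] {a g b : V}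
    (h : ‖a - g - b‖ ≤ ‖a - g - a‖) : ‖b - a‖ ≤ 2 * ‖g‖ := by
  have hg : ‖a - g - a‖ = ‖g‖ := by rw [sub_sub_cancel_left, norm_neg]
  calc ‖b - a‖ = ‖(a - g - a) - (a - g - b)‖ := by rw [sub_sub_sub_cancel_left]
    _ ≤ ‖a - g - a‖ + ‖a - g - b‖ := norm_sub_le _ _
    _ ≤ 2 * ‖g‖ := by linarith

lemma exists_norm_le_of_lipschitz {V₁ V₂ W : Type*} [SeminormedAddCommGroup V₁]
    [SeminormedAddCommGroup V₂] [SeminormedAddCommGroup W] {f : V₁ → V₂ → W} {L : ℝ}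
    (hf : ∀ a a' b b', ‖f a b - f a' b'‖ ≤ L * √(‖a - a'‖ ^ 2 + ‖b - b'‖ ^ 2)) (r : ℝ) :
    ∃ C, ∀ a b, ‖a‖ ≤ r → ‖b‖ ≤ r → ‖f a b‖ ≤ C := by
  refine ⟨|L| * √(r ^ 2 + r ^ 2) + ‖f 0 0‖, fun a b ha hb => ?_⟩
  refine (norm_le_norm_sub_add _ (f 0 0)).trans (add_le_add_left ?_ _)
  calc
    _ ≤ L * √(‖a‖ ^ 2 + ‖b‖ ^ 2) := by simpa only [sub_zero] using hf a 0 b 0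
    _ ≤ |L| * √(r ^ 2 + r ^ 2) := by
      gcongr
      exact le_abs_self L

theorem pushsum_consensus_weighted_summable_general
    {n N : ℕ} {hnN : n ≤ N} {V : Type*} [NormedAddCommGroup V] [NormedSpace ℝ V]
    {X : Fin n → Set V} (hX : ∀ i, Bornology.IsBounded (X i)) {F : Fin n → V → V → V}
    (hF : ∀ i r, ∃ C, ∀ a b, ‖a‖ ≤ r → ‖b‖ ≤ r → ‖F i a b‖ ≤ C)
    {A : ℕ → Matrix (Fin N) (Fin N) ℝ} (hAcol : ∀ k j, ∑ i, A k i j = 1)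
    {v w : ℕ → Fin N → V} {y : ℕ → Fin N → ℝ} {x z : ℕ → Fin n → V}
    (hx0 : ∀ i, x 0 i ∈ X i)
    (hv0p : ∀ i, v 0 (Fin.castLE hnN i) = x 0 i) (hy0p : ∀ i, y 0 (Fin.castLE hnN i) = 1)
    (hv0v : ∀ j : Fin N, n ≤ (j : ℕ) → v 0 j = 0) (hy0v : ∀ j : Fin N, n ≤ (j : ℕ) → y 0 j = 0)
    {Aset : ℕ → Finset (Fin n)} {l : Fin n → ℕ → ℕ} {σ : ℕ}
    (hlact : ∀ i k, i ∈ Aset k → l i k ≤ l i (k + 1) ∧ l i (k + 1) ≤ l i k + σ)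
    (hlstay : ∀ i k, i ∉ Aset k → l i (k + 1) = l i k)
    {ρ : ℕ → ℝ} (hρsq : Summable fun t => ρ t ^ 2) {α : Fin n → ℕ → ℝ}
    (hα : ∀ i k, α i k = ∑ t ∈ Finset.Ico (l i k) (l i (k + 1)), ρ t)
    (hw : ∀ k j, w (k + 1) j = ∑ m, A k j m • v k m)
    (hy : ∀ k j, y (k + 1) j = ∑ m, A k j m * y k m)
    (hz : ∀ k i, z (k + 1) i = (y (k + 1) (Fin.castLE hnN i))⁻¹ • w (k + 1) (Fin.castLE hnN i))
    (hxup : ∀ k i, i ∈ Aset k → x (k + 1) i ∈ X i ∧ ∀ u ∈ X i,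
      ‖x k i - α i k • F i (x k i) (z (k + 1) i) - x (k + 1) i‖ ≤
        ‖x k i - α i k • F i (x k i) (z (k + 1) i) - u‖)
    (hxstay : ∀ k i, i ∉ Aset k → x (k + 1) i = x k i)
    (hv : ∀ k j, v (k + 1) j =
      w (k + 1) j + (if h : (j : ℕ) < n then x (k + 1) ⟨j, h⟩ - x k ⟨j, h⟩ else 0))
    {B lam η : ℝ} (hB : 0 ≤ B) (hlam0 : 0 ≤ lam) (hlam1 : lam < 1) (hη : 0 < η)
    {φ : ℕ → Fin N → ℝ} (hE : IsGeometricallyErgodic A φ B lam)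
    (hylb : ∀ i k, 1 ≤ k → η ≤ y k (Fin.castLE hnN i)) (i : Fin n) :
    Summable fun k => ρ k * ‖z (k + 1) i - (n : ℝ)⁻¹ • ∑ j, x k j‖ := by
  have hT := IsPushSumTracking.of_castLE hv0p hy0p hv0v hy0v hw hy hv
  have he := Fin.castLE_injective hnN
  have hyη (i k) : η ≤ y (k + 1) (Fin.castLE hnN i) := hylb i (k + 1) k.succ_pos
  have hratio (k i) : z (k + 1) i =
      (y (k + 1) (Fin.castLE hnN i))⁻¹ • (A k • v k) (Fin.castLE hnN i) := by
    rw [hz, hw, Matrix.Module.smul_apply]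
  have hxX : ∀ k i, x k i ∈ X i := Nat.rec hx0 fun k ih i => by
    by_cases hi : i ∈ Aset k
    · exact (hxup k i hi).1
    · exact hxstay k i hi ▸ ih i
  obtain ⟨R, hR⟩ := (Bornology.isBounded_iUnion.2 hX).exists_norm_le
  replace hR (k i) : ‖x k i‖ ≤ R := hR _ (Set.mem_iUnion_of_mem i (hxX k i))
  obtain ⟨Z, hZ⟩ := hT.exists_norm_ratio_le he hAcol hE hB hlam0 hlam1 hη hR
  replace hZ (k i) : ‖z (k + 1) i‖ ≤ Z := hratio k i ▸ hZ k _ (hyη i k)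
  have hstep (i k) : |‖x (k + 1) i - x k i‖| ≤ 2 * |‖α i k • F i (x k i) (z (k + 1) i)‖| := by
    simp only [abs_norm]
    by_cases hi : i ∈ Aset k
    · exact norm_sub_le_two_mul_of_norm_sub_le ((hxup k i hi).2 _ (hxX k i))
    · simp [hxstay k i hi]
  have hl (i k) : l i k ≤ l i (k + 1) ∧ l i (k + 1) ≤ l i k + σ := by
    by_cases hi : i ∈ Aset k
    · exact hlact i k hi
    · simp [hlstay i k hi]
  have hαsq (i) : Summable fun k => α i k ^ 2 := by
    simpa only [hα] using summable_sq_sum_Ico (hl i) hρsq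
  have hstepsq (i) : Summable fun k => ‖x (k + 1) i - x k i‖ ^ 2 := by
    obtain ⟨C, hC⟩ := hF i (max R Z)
    have hFC (k) := hC _ _ (le_max_of_le_left (hR k i)) (le_max_of_le_right (hZ k i))
    exact summable_sq_of_abs_le_mul (summable_sq_norm_smul (hαsq i) hFC) (hstep i)
  simpa only [hratio, Fintype.card_fin] using
    hT.summable_mul_norm_ratio_sub_average he hAcol hE hB hlam0 hlam1 hη (hyη i)
      (fun k => norm_sum_le_of_le _ fun i _ => hR k i) (summable_sq_sum fun i _ => hstepsq i) hρsq

/-- Lemma 2(c): under the augmented push-sum dynamics with the ergodicity hypothesis,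
the ρ-weighted consensus error of each player is summable:
`∑ₖ ρ(k) ‖z_i(k+1) − x̄(k)‖ < ∞`. -/
theorem pushsum_consensus_weighted_summable
    (n N p : ℕ) (hn : 0 < n) (hnN : n ≤ N)
    (X : Fin n → Set (EuclideanSpace ℝ (Fin p)))
    -- nonempty convex compact action sets
    (hXne : ∀ i, (X i).Nonempty)
    (hXconv : ∀ i, Convex ℝ (X i))
    (hXcomp : ∀ i, IsCompact (X i))
    -- the game mappings, L-Lipschitz on ℝ^p × ℝ^p
    (F : Fin n → EuclideanSpace ℝ (Fin p) → EuclideanSpace ℝ (Fin p) →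
      EuclideanSpace ℝ (Fin p))
    (L : ℝ) (hLpos : 0 < L)
    (hFlip : ∀ i xi xi' z z',
      ‖F i xi z - F i xi' z'‖ ≤ L * Real.sqrt (‖xi - xi'‖ ^ 2 + ‖z - z'‖ ^ 2))
    -- nonnegative column-stochastic matrices
    (A : ℕ → Matrix (Fin N) (Fin N) ℝ)
    (hAnn : ∀ k i j, 0 ≤ A k i j)
    (hAcol : ∀ k j, ∑ i, A k i j = 1)
    -- states
    (v w : ℕ → Fin N → EuclideanSpace ℝ (Fin p))
    (y : ℕ → Fin N → ℝ)
    (x z : ℕ → Fin n → EuclideanSpace ℝ (Fin p))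
    -- initialization
    (hx0 : ∀ i, x 0 i ∈ X i)
    (hv0p : ∀ i : Fin n, v 0 (Fin.castLE hnN i) = x 0 i)
    (hy0p : ∀ i : Fin n, y 0 (Fin.castLE hnN i) = 1)
    (hv0v : ∀ j : Fin N, n ≤ (j : ℕ) → v 0 j = 0)
    (hy0v : ∀ j : Fin N, n ≤ (j : ℕ) → y 0 j = 0)
    -- activation sets
    (Aset : ℕ → Finset (Fin n))
    (hAsetne : ∀ k, (Aset k).Nonempty)
    (σ1 : ℕ) (hσ1 : 1 ≤ σ1)
    (hcover : ∀ k, ∀ i : Fin n, ∃ u, k + 1 ≤ u ∧ u ≤ k + σ1 ∧ i ∈ Aset u)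
    -- counters
    (l : Fin n → ℕ → ℕ) (σ2 : ℕ) (hσ2 : 1 ≤ σ2)
    (hl0 : ∀ i, l i 0 = 0)
    (hlact : ∀ i k, i ∈ Aset k → l i k + 1 ≤ l i (k + 1) ∧ l i (k + 1) ≤ l i k + σ2)
    (hlstay : ∀ i k, i ∉ Aset k → l i (k + 1) = l i k)
    -- stepsize generating sequence
    (ρ : ℕ → ℝ)
    (hρpos : ∀ t, 0 < ρ t)
    (hρmono : ∀ t, ρ (t + 1) ≤ ρ t)
    (hρsq : Summable fun t => ρ t ^ 2)
    (α : Fin n → ℕ → ℝ)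
    (hα : ∀ i k, α i k = ∑ t ∈ Finset.Ico (l i k) (l i (k + 1)), ρ t)
    -- push-sum dynamics
    (hw : ∀ k, ∀ j : Fin N, w (k + 1) j = ∑ m, A k j m • v k m)
    (hy : ∀ k, ∀ j : Fin N, y (k + 1) j = ∑ m, A k j m * y k m)
    (hz : ∀ k, ∀ i : Fin n,
      z (k + 1) i = (y (k + 1) (Fin.castLE hnN i))⁻¹ • w (k + 1) (Fin.castLE hnN i))
    -- the projected pseudo-gradient update for active players
    (hxup : ∀ k, ∀ i : Fin n, i ∈ Aset k →
      x (k + 1) i ∈ X i ∧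
      ∀ u ∈ X i,
        ‖x k i - α i k • F i (x k i) (z (k + 1) i) - x (k + 1) i‖ ≤
        ‖x k i - α i k • F i (x k i) (z (k + 1) i) - u‖)
    (hxstay : ∀ k, ∀ i : Fin n, i ∉ Aset k → x (k + 1) i = x k i)
    (hv : ∀ k, ∀ j : Fin N, v (k + 1) j =
      w (k + 1) j + (if h : (j : ℕ) < n then x (k + 1) ⟨j, h⟩ - x k ⟨j, h⟩ else 0))
    -- ergodicity hypothesis
    (B' lam η : ℝ) (hB' : 0 < B') (hlam : lam ∈ Set.Ioo (0 : ℝ) 1)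
    (hη : η ∈ Set.Ioc (0 : ℝ) 1)
    (φvec : ℕ → Fin N → ℝ)
    (hφnn : ∀ k i, 0 ≤ φvec k i)
    (hφsum : ∀ k, ∑ i, φvec k i = 1)
    (herg : ∀ k t, t ≤ k → ∀ i j : Fin N, |backProd A k t i j - φvec k i| ≤ B' * lam ^ t)
    (hylb : ∀ i : Fin n, ∀ k, 1 ≤ k → η ≤ y k (Fin.castLE hnN i)) :
    ∀ i : Fin n,
      Summable (fun k => ρ k * ‖z (k + 1) i - (n : ℝ)⁻¹ • ∑ j, x k j‖) :=
  pushsum_consensus_weighted_summable_general (fun i => (hXcomp i).isBounded)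
    (fun i => exists_norm_le_of_lipschitz (hFlip i)) hAcol hx0 hv0p hy0p hv0v hy0v
    (fun i k hi => (hlact i k hi).imp_left Nat.le_of_succ_le) hlstay hρsq hα hw hy hz hxup hxstay
    hv hB'.le hlam.1.le hlam.2 hη.1 herg hylb
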